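/- arXiv:1908.02829 — 2 statements merged into one kernel-verified Lean document; each statement's English description precedes it below -/
import Mathlib

section
/- Let A be a rectangular sublattice with boundary ∂A. If g_{∂A} and g'_{∂A} are two assignments of group elements to the edges of ∂A, each with trivial holonomy around the full boundary loop ∂A, then there exists a product U_{∂A} of gauge transformations A_v(h_v) at vertices v of ∂A that transforms the assignment g_{∂A} into the assignment g'_{∂A}. -/
/-!
Kitaev's quantum double model, formalized on the concrete `L × L` periodic square
lattice on the torus (the setting of Bravyi–Hastings–Michalakis TQO conditions used
in the paper).  Vertices are `ZMod L × ZMod L`; an oriented edge is a pair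
`(v, d)` of its base vertex `v` and a direction `d : Bool` (`false` = rightward,
`true` = upward).  Each edge carries `ℂ[G]`, so the total Hilbert space is
`(Edge L → G) → ℂ` with the "group basis" given by delta functions.
"Contained in a contractible subregion" is rendered as the rectangle having side
lengths `< L`, i.e. not wrapping around the torus.
-/

open scoped BigOperators Classical

noncomputable section

namespace QDM

/-- Vertices of the `L × L` periodic square lattice on the torus. -/
abbrev Vtx (L : ℕ) := ZMod L × ZMod L

/-- Oriented edges: base vertex together with a direction
(`false` = rightward, `true` = upward). -/
abbrev Edge (L : ℕ) := (ZMod L × ZMod L) × Bool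

/-- Source vertex of an edge. -/
def src {L : ℕ} (e : Edge L) : Vtx L := e.1

/-- Target vertex of an edge. -/
def tgt {L : ℕ} (e : Edge L) : Vtx L := if e.2 then e.1 + (0, 1) else e.1 + (1, 0)

/-- A step of a path: an edge together with a direction of traversal
(`true` = along the orientation of the edge, `false` = against it). -/
abbrev Step (L : ℕ) := Edge L × Bool

/-- Initial vertex of a step. -/
def stepStart {L : ℕ} (s : Step L) : Vtx L := if s.2 then src s.1 else tgt s.1

/-- Final vertex of a step. -/
def stepEnd {L : ℕ} (s : Step L) : Vtx L := if s.2 then tgt s.1 else src s.1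

/-- A (nonempty) closed loop: consecutive steps are linked and the last step ends
where the first begins. -/
def IsLoop {L : ℕ} (γ : List (Step L)) : Prop :=
  γ ≠ [] ∧ γ.Chain' (fun a b => stepEnd a = stepStart b) ∧
    ∀ a ∈ γ.head?, ∀ b ∈ γ.getLast?, stepEnd b = stepStart a

/-- A (possibly empty) closed loop based at `v₀`. -/
def IsLoopAt {L : ℕ} (v₀ : Vtx L) (γ : List (Step L)) : Prop :=
  γ.Chain' (fun a b => stepEnd a = stepStart b) ∧
    (∀ a ∈ γ.head?, stepStart a = v₀) ∧ ∀ b ∈ γ.getLast?, stepEnd b = v₀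

/-- A classical field configuration: one group element per edge.  The group-basis
state `|g⟩` of the paper corresponds to the delta function `deltaF g`. -/
abbrev Config (G : Type) (L : ℕ) := Edge L → G

/-- Holonomy of a configuration along a path: the ordered product of the edge
elements, inverting the elements on edges traversed against their orientation. -/
def hol {G : Type} [Group G] {L : ℕ} (x : Config G L) (γ : List (Step L)) : G :=
  (γ.map fun s => if s.2 then x s.1 else (x s.1)⁻¹).prod

/-- The counterclockwise boundary loop of the plaquette whose lower-left corner
is `p`. -/
def plaqBoundary {L : ℕ} (p : Vtx L) : List (Step L) :=
  [((p, false), true), ((p + (1, 0), true), true),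
   ((p + (0, 1), false), false), ((p, true), false)]

/-- Action on configurations of the local gauge transformation `A_v(h)`:
left multiplication by `h` on edges oriented away from `v`, right multiplication
by `h⁻¹` on edges oriented towards `v`. -/
def gaugeOne {G : Type} [Group G] {L : ℕ} (v : Vtx L) (h : G) (x : Config G L) :
    Config G L :=
  fun e => (if src e = v then h else 1) * x e * (if tgt e = v then h⁻¹ else 1)

/-- Action on configurations of the product of the gauge transformations
`A_v(f v)` over all vertices `v`. -/
def gaugeAll {G : Type} [Group G] {L : ℕ} (f : Vtx L → G) (x : Config G L) :
    Config G L :=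
  fun e => f (src e) * x e * (f (tgt e))⁻¹

/-! ### Hilbert space and operators -/

/-- The total Hilbert space `⊗_{e ∈ E} ℂ[G]`, realized as functions on the set of
group-basis labels. -/
abbrev H (G : Type) (L : ℕ) := Config G L → ℂ

/-- The standard inner product (antilinear in the first slot) on a finite
function space. -/
def finner {α : Type} [Fintype α] (ψ φ : α → ℂ) : ℂ :=
  ∑ x : α, (starRingEnd ℂ) (ψ x) * φ x

/-- The basis state `|y⟩` as a delta function. -/
def deltaF {α : Type} (y : α) : α → ℂ := fun x => if x = y then 1 else 0

/-- Diagonal (in the given basis) operator with diagonal entries `c`. -/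
def diagOpF {α : Type} (c : α → ℂ) : (α → ℂ) →ₗ[ℂ] (α → ℂ) where
  toFun ψ := fun x => c x * ψ x
  map_add' ψ φ := by funext x; simp [mul_add]
  map_smul' r ψ := by
    funext x
    simp only [Pi.smul_apply, smul_eq_mul, RingHom.id_apply]
    ring

/-- The adjoint of an operator with respect to the standard inner product. -/
noncomputable def adjOp {α : Type} [Fintype α] (O : (α → ℂ) →ₗ[ℂ] (α → ℂ)) :
    (α → ℂ) →ₗ[ℂ] (α → ℂ) :=
  Matrix.toLin' (Matrix.conjTranspose (LinearMap.toMatrix' O))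

/-- `P` is the orthogonal projector onto the subspace `W` (with respect to the
standard inner product): idempotent, self-adjoint, with range `W`. -/
def IsOrthProjOnto {α : Type} [Fintype α] (P : (α → ℂ) →ₗ[ℂ] (α → ℂ))
    (W : Submodule ℂ (α → ℂ)) : Prop :=
  P ∘ₗ P = P ∧ LinearMap.range P = W ∧ ∀ ψ φ, finner (P ψ) φ = finner ψ (P φ)

/-- The gauge transformation operator `A_v(h)` (a permutation of the group
basis). -/
def Avg (G : Type) [Group G] (L : ℕ) (v : Vtx L) (h : G) : H G L →ₗ[ℂ] H G L :=
  LinearMap.funLeft ℂ ℂ (gaugeOne v h⁻¹)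

/-- The vertex projector `A_v = (1/|G|) ∑_h A_v(h)`. -/
noncomputable def Av (G : Type) [Group G] [Fintype G] (L : ℕ) (v : Vtx L) :
    H G L →ₗ[ℂ] H G L :=
  (Fintype.card G : ℂ)⁻¹ • ∑ h : G, Avg G L v h

/-- The plaquette projector `B_p`, projecting onto group-basis states whose
holonomy counterclockwise around the plaquette `p` is trivial. -/
def Bp (G : Type) [Group G] (L : ℕ) (p : Vtx L) : H G L →ₗ[ℂ] H G L :=
  diagOpF fun x => if hol x (plaqBoundary p) = 1 then 1 else 0

/-- The ground space `V_gs` of Kitaev's quantum double model: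
common fixed space of all `A_v` and all `B_p`. -/
def groundSpace (G : Type) [Group G] [Fintype G] (L : ℕ) : Submodule ℂ (H G L) :=
  (⨅ v : Vtx L, LinearMap.ker (Av G L v - LinearMap.id)) ⊓
    ⨅ p : Vtx L, LinearMap.ker (Bp G L p - LinearMap.id)

/-- The gauge-invariant (physical) subspace: common fixed space of all `A_v`. -/
def Hgauge (G : Type) [Group G] [Fintype G] (L : ℕ) : Submodule ℂ (H G L) :=
  ⨅ v : Vtx L, LinearMap.ker (Av G L v - LinearMap.id)

/-! ### Rectangular sublattices -/

/-- The edges of the `w × h` rectangular sublattice with lower-left corner `c`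
(including the edges on its boundary). -/
def rectEdges (L : ℕ) (c : Vtx L) (w h : ℕ) : Set (Edge L) :=
  { e | ∃ i j : ℕ, e.1 = c + ((i : ZMod L), (j : ZMod L)) ∧
      if e.2 then i ≤ w ∧ j < h else i < w ∧ j ≤ h }

/-- The vertices of the rectangular sublattice. -/
def rectVtx (L : ℕ) (c : Vtx L) (w h : ℕ) : Set (Vtx L) :=
  { v | ∃ i j : ℕ, i ≤ w ∧ j ≤ h ∧ v = c + ((i : ZMod L), (j : ZMod L)) }

/-- The interior vertices of the rectangular sublattice. -/
def rectIntVtx (L : ℕ) (c : Vtx L) (w h : ℕ) : Set (Vtx L) :=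
  { v | ∃ i j : ℕ, 0 < i ∧ i < w ∧ 0 < j ∧ j < h ∧
      v = c + ((i : ZMod L), (j : ZMod L)) }

/-- The boundary vertices of the rectangular sublattice. -/
def rectBdryVtx (L : ℕ) (c : Vtx L) (w h : ℕ) : Set (Vtx L) :=
  { v | ∃ i j : ℕ, i ≤ w ∧ j ≤ h ∧ (i = 0 ∨ i = w ∨ j = 0 ∨ j = h) ∧
      v = c + ((i : ZMod L), (j : ZMod L)) }

/-- The plaquettes of the rectangular sublattice (labelled by their lower-left
corners). -/
def rectPlaqs (L : ℕ) (c : Vtx L) (w h : ℕ) : Set (Vtx L) :=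
  { p | ∃ i j : ℕ, i < w ∧ j < h ∧ p = c + ((i : ZMod L), (j : ZMod L)) }

/-- The boundary edges of the rectangular sublattice. -/
def rectBdryEdges (L : ℕ) (c : Vtx L) (w h : ℕ) : Set (Edge L) :=
  { e | ∃ i j : ℕ, e.1 = c + ((i : ZMod L), (j : ZMod L)) ∧
      if e.2 then (i = 0 ∨ i = w) ∧ j < h else i < w ∧ (j = 0 ∨ j = h) }

/-! ### Reduced states and local operators -/

/-- Combine a configuration on the edges in `A` with one on the complementary
edges. -/
def merge {S : Type} {L : ℕ} (A : Set (Edge L)) (a : {e : Edge L // e ∈ A} → S)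
    (b : {e : Edge L // e ∉ A} → S) : Edge L → S :=
  fun e => if h : e ∈ A then a ⟨e, h⟩ else b ⟨e, h⟩

/-- The reduced density matrix `Tr_{Ā} |ψ⟩⟨ψ|` of a state `ψ` on the edges in
`A`. -/
noncomputable def rho {S : Type} [Fintype S] {L : ℕ} [NeZero L] (A : Set (Edge L))
    (ψ : (Edge L → S) → ℂ) :
    Matrix ({e : Edge L // e ∈ A} → S) ({e : Edge L // e ∈ A} → S) ℂ :=
  Matrix.of fun a a' => ∑ b : {e : Edge L // e ∉ A} → S,
    ψ (merge A a b) * (starRingEnd ℂ) (ψ (merge A a' b))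

/-- The partial trace over the complement of `A` of an operator. -/
noncomputable def ptraceOp {S : Type} [Fintype S] {L : ℕ} [NeZero L]
    (A : Set (Edge L)) (O : ((Edge L → S) → ℂ) →ₗ[ℂ] ((Edge L → S) → ℂ)) :
    Matrix ({e : Edge L // e ∈ A} → S) ({e : Edge L // e ∈ A} → S) ℂ :=
  Matrix.of fun a a' => ∑ b : {e : Edge L // e ∉ A} → S,
    O (deltaF (merge A a' b)) (merge A a b)

/-- An operator is supported on the edges in `A` if its matrix in the product
basis has the form `M ⊗ 𝟙`. -/
def SupportedOn {S : Type} {L : ℕ} (A : Set (Edge L))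
    (O : ((Edge L → S) → ℂ) →ₗ[ℂ] ((Edge L → S) → ℂ)) : Prop :=
  ∃ M : Matrix ({e : Edge L // e ∈ A} → S) ({e : Edge L // e ∈ A} → S) ℂ,
    ∀ (a a' : {e : Edge L // e ∈ A} → S) (b b' : {e : Edge L // e ∉ A} → S),
      O (deltaF (merge A a' b')) (merge A a b) = if b = b' then M a a' else 0

end QDM

namespace QDM

/-- The counterclockwise boundary loop of the `w × h` rectangle with lower-left
corner `c`: along the bottom, up the right side, backwards along the top, and
down the left side. -/
def rectBdryLoop (L : ℕ) (c : Vtx L) (w h : ℕ) : List (Step L) :=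
  ((List.range w).map fun i => (((c + ((i : ZMod L), (0 : ZMod L)), false) : Edge L), true)) ++
  ((List.range h).map fun j => (((c + ((w : ZMod L), (j : ZMod L)), true) : Edge L), true)) ++
  ((List.range w).reverse.map fun i =>
      (((c + ((i : ZMod L), (h : ZMod L)), false) : Edge L), false)) ++
  ((List.range h).reverse.map fun j =>
      (((c + ((0 : ZMod L), (j : ZMod L)), true) : Edge L), false))

end QDM

namespace QDM

/-!
A configuration with trivial holonomy around `∂A` is a pure gauge on `∂A`: it has a potential `p`,
the holonomy from the lower-left corner, with `p (tgt e) = p (src e) * x e` on every boundary edge.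
Travelling from the lower-left to the upper-right corner along either half of `∂A` gives the same
group element, and this is exactly what makes `p` well defined. If `p` and `p'` are potentials of
`x` and `x'`, the gauge transformation `v ↦ (p' v)⁻¹ * p v` takes `x` to `x'`.
-/

section Holonomy

variable {G : Type} [Group G] {L : ℕ}

/-- The path `γ` traversed backwards. -/
def reversePath (γ : List (Step L)) : List (Step L) :=
  (γ.map fun s => (s.1, !s.2)).reverse

/-- The path of `n` rightward steps starting at `c + (0, j)`. -/
def rowPath (c : Vtx L) (j : ZMod L) (n : ℕ) : List (Step L) :=
  (List.range n).map fun i : ℕ => ((c + ((i : ZMod L), j), false), true)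

/-- The path of `n` upward steps starting at `c + (i, 0)`. -/
def colPath (c : Vtx L) (i : ZMod L) (n : ℕ) : List (Step L) :=
  (List.range n).map fun j : ℕ => ((c + (i, (j : ZMod L)), true), true)

theorem hol_append (x : Config G L) (γ δ : List (Step L)) :
    hol x (γ ++ δ) = hol x γ * hol x δ := by
  simp [hol]

theorem hol_reversePath (x : Config G L) (γ : List (Step L)) :
    hol x (reversePath γ) = (hol x γ)⁻¹ := by
  rw [hol, hol, reversePath, List.prod_inv_reverse, List.map_reverse, List.map_map, List.map_map]
  congr 3
  funext ⟨e, forward⟩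
  cases forward <;> simp

theorem hol_append_rowPath_succ (x : Config G L) (γ : List (Step L)) (c : Vtx L) (j : ZMod L)
    (n : ℕ) :
    hol x (γ ++ rowPath c j (n + 1)) =
      hol x (γ ++ rowPath c j n) * x (c + ((n : ZMod L), j), false) := by
  simp [hol, rowPath, List.range_succ, mul_assoc]

theorem hol_append_colPath_succ (x : Config G L) (γ : List (Step L)) (c : Vtx L) (i : ZMod L)
    (n : ℕ) :
    hol x (γ ++ colPath c i (n + 1)) =
      hol x (γ ++ colPath c i n) * x (c + (i, (n : ZMod L)), true) := by
  simp [hol, colPath, List.range_succ, mul_assoc]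

theorem rectBdryLoop_eq_append_reversePath (c : Vtx L) (w h : ℕ) :
    rectBdryLoop L c w h =
      (rowPath c 0 w ++ colPath c w h) ++ reversePath (colPath c 0 h ++ rowPath c h w) := by
  -- `rectBdryLoop` casts each `List.range` to `List (ZMod L)` through a `flatMap`.
  simp [rectBdryLoop, rowPath, colPath, reversePath, Function.comp_def, ← List.map_eq_flatMap]

theorem hol_rectBdryLoop_eq_one_iff (x : Config G L) (c : Vtx L) (w h : ℕ) :
    hol x (rectBdryLoop L c w h) = 1 ↔
      hol x (rowPath c 0 w ++ colPath c w h) = hol x (colPath c 0 h ++ rowPath c h w) := by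
  rw [rectBdryLoop_eq_append_reversePath, hol_append, hol_reversePath, mul_inv_eq_one]

end Holonomy

section RectangleBoundary

variable {L : ℕ}

theorem tgt_rightward (c : Vtx L) (i j : ℕ) :
    tgt (c + ((i : ZMod L), (j : ZMod L)), false) =
      c + (((i + 1 : ℕ) : ZMod L), (j : ZMod L)) := by
  simp [tgt, add_assoc]

theorem tgt_upward (c : Vtx L) (i j : ℕ) :
    tgt (c + ((i : ZMod L), (j : ZMod L)), true) =
      c + ((i : ZMod L), ((j + 1 : ℕ) : ZMod L)) := by
  simp [tgt, add_assoc]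

theorem forall_mem_rectBdryEdges {c : Vtx L} {w h : ℕ} {P : Edge L → Prop} :
    (∀ e ∈ rectBdryEdges L c w h, P e) ↔
      (∀ i j : ℕ, i < w → j = 0 ∨ j = h → P (c + ((i : ZMod L), (j : ZMod L)), false)) ∧
      (∀ i j : ℕ, i = 0 ∨ i = w → j < h → P (c + ((i : ZMod L), (j : ZMod L)), true)) := by
  constructor
  · intro hP
    exact ⟨fun i j hi hj => hP _ ⟨i, j, rfl, by simp [hi, hj]⟩,
      fun i j hi hj => hP _ ⟨i, j, rfl, by simp [hi, hj]⟩⟩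
  · rintro ⟨hright, hup⟩ ⟨v, _ | _⟩ ⟨i, j, rfl, hij⟩
    · simp only [Bool.false_eq_true, if_false] at hij
      exact hright i j hij.1 hij.2
    · simp only [if_true] at hij
      exact hup i j hij.1 hij.2

theorem src_mem_rectBdryVtx {c : Vtx L} {w h : ℕ} :
    ∀ e ∈ rectBdryEdges L c w h, src e ∈ rectBdryVtx L c w h :=
  forall_mem_rectBdryEdges.2
    ⟨fun i j _ _ => ⟨i, j, by omega, by omega, by omega, rfl⟩,
      fun i j _ _ => ⟨i, j, by omega, by omega, by omega, rfl⟩⟩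

theorem tgt_mem_rectBdryVtx {c : Vtx L} {w h : ℕ} :
    ∀ e ∈ rectBdryEdges L c w h, tgt e ∈ rectBdryVtx L c w h :=
  forall_mem_rectBdryEdges.2
    ⟨fun i j _ _ => ⟨i + 1, j, by omega, by omega, by omega, tgt_rightward c i j⟩,
      fun i j _ _ => ⟨i, j + 1, by omega, by omega, by omega, tgt_upward c i j⟩⟩

end RectangleBoundary

section Potential

variable {G : Type} [Group G] {L : ℕ}

/-- `p` is a potential of `x` on the edges in `S`: there, `x` is the pure gauge configuration
`e ↦ (p (src e))⁻¹ * p (tgt e)`. -/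
def IsPotentialOn (x : Config G L) (S : Set (Edge L)) (p : Vtx L → G) : Prop :=
  ∀ e ∈ S, p (tgt e) = p (src e) * x e

theorem IsPotentialOn.exists_gauge {x x' : Config G L} {S : Set (Edge L)} {p p' : Vtx L → G}
    {W : Set (Vtx L)} (hp : IsPotentialOn x S p) (hp' : IsPotentialOn x' S p')
    (hsrc : ∀ e ∈ S, src e ∈ W) (htgt : ∀ e ∈ S, tgt e ∈ W) :
    ∃ f : Vtx L → G, (∀ v, v ∉ W → f v = 1) ∧
      ∀ e ∈ S, x' e = f (src e) * x e * (f (tgt e))⁻¹ := by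
  refine ⟨W.mulIndicator (p'⁻¹ * p), fun v hv => Set.mulIndicator_of_notMem hv _, fun e he => ?_⟩
  rw [Set.mulIndicator_of_mem (hsrc e he), Set.mulIndicator_of_mem (htgt e he)]
  simp only [Pi.mul_apply, Pi.inv_apply, hp e he, hp' e he]
  group

/-- The holonomy of `x` from `c` to `c + (i, j)` along the boundary of a rectangle of height `h`
with lower-left corner `c`: up the left side and along the top if `j = h`, and along the bottom and
then upwards otherwise. It is only meaningful for `c + (i, j)` on that boundary. -/
def cornerHol (x : Config G L) (c : Vtx L) (h i j : ℕ) : G :=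
  if j = h then hol x (colPath c 0 h ++ rowPath c h i) else hol x (rowPath c 0 i ++ colPath c i j)

theorem cornerHol_top (x : Config G L) (c : Vtx L) (h i : ℕ) :
    cornerHol x c h i h = hol x (colPath c 0 h ++ rowPath c h i) :=
  if_pos rfl

theorem cornerHol_bottom (x : Config G L) (c : Vtx L) (h i : ℕ) :
    cornerHol x c h i 0 = hol x (rowPath c 0 i) := by
  rcases eq_or_ne 0 h with rfl | hh <;> simp [cornerHol, colPath, *]

variable {x : Config G L} {c : Vtx L} {w h : ℕ}

-- Only at the upper corners do the two branches of `cornerHol` have to be compared: at the left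
-- one they describe the same path, at the right one they agree because the holonomy is trivial.
theorem cornerHol_side (hx : hol x (rectBdryLoop L c w h) = 1) {i : ℕ} (hi : i = 0 ∨ i = w)
    (j : ℕ) : cornerHol x c h i j = hol x (rowPath c 0 i ++ colPath c i j) := by
  rcases eq_or_ne j h with rfl | hj
  · rw [cornerHol_top]
    rcases hi with rfl | rfl
    · simp [rowPath]
    · exact ((hol_rectBdryLoop_eq_one_iff x c i j).1 hx).symm
  · exact if_neg hj

theorem cornerHol_succ_left {i j : ℕ} (hj : j = 0 ∨ j = h) :
    cornerHol x c h (i + 1) j =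
      cornerHol x c h i j * x (c + ((i : ZMod L), (j : ZMod L)), false) := by
  rcases hj with rfl | rfl
  · simpa only [cornerHol_bottom, List.nil_append, Nat.cast_zero] using
      hol_append_rowPath_succ x [] c 0 i
  · simpa only [cornerHol_top] using hol_append_rowPath_succ x (colPath c 0 j) c j i

theorem cornerHol_succ_right (hx : hol x (rectBdryLoop L c w h) = 1) {i j : ℕ}
    (hi : i = 0 ∨ i = w) :
    cornerHol x c h i (j + 1) =
      cornerHol x c h i j * x (c + ((i : ZMod L), (j : ZMod L)), true) := by
  rw [cornerHol_side hx hi, cornerHol_side hx hi, hol_append_colPath_succ]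

/-- `cornerHol` as a function on the vertices of the torus, whose coordinates relative to `c` are
represented by natural numbers below `L`. -/
def rectPotential (x : Config G L) (c : Vtx L) (h : ℕ) (v : Vtx L) : G :=
  cornerHol x c h (v.1 - c.1).val (v.2 - c.2).val

theorem rectPotential_add {i j : ℕ} (hi : i < L) (hj : j < L) :
    rectPotential x c h (c + ((i : ZMod L), (j : ZMod L))) = cornerHol x c h i j := by
  simp [rectPotential, ZMod.val_natCast_of_lt hi, ZMod.val_natCast_of_lt hj]

theorem isPotentialOn_rectPotential (hwL : w < L) (hhL : h < L)
    (hx : hol x (rectBdryLoop L c w h) = 1) :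
    IsPotentialOn x (rectBdryEdges L c w h) (rectPotential x c h) := by
  refine forall_mem_rectBdryEdges.2 ⟨fun i j hi hj => ?_, fun i j hi hj => ?_⟩
  · rw [tgt_rightward, src, rectPotential_add (by omega) (by omega),
      rectPotential_add (by omega) (by omega), cornerHol_succ_left hj]
  · rw [tgt_upward, src, rectPotential_add (by omega) (by omega),
      rectPotential_add (by omega) (by omega), cornerHol_succ_right hx hi]

end Potential

/-- **Boundary gauge transformations.**  Let `A` be a `w × h` rectangle (with
`0 < w < L`, `0 < h < L`).  If two configurations both have trivial holonomy
around the full boundary loop `∂A`, then there is a product of gauge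
transformations at the vertices of `∂A` — i.e. a function `f : V → G` supported
on the boundary vertices — transforming the first assignment into the second on
all boundary edges. -/
theorem boundary_gauge_transformation_exists
    (G : Type) [Group G] (L : ℕ) [NeZero L] (c : Vtx L) (w h : ℕ)
    (hw : 0 < w) (hwL : w < L) (hh : 0 < h) (hhL : h < L)
    (x x' : Config G L)
    (hx : hol x (rectBdryLoop L c w h) = 1)
    (hx' : hol x' (rectBdryLoop L c w h) = 1) :
    ∃ f : Vtx L → G, (∀ v : Vtx L, v ∉ rectBdryVtx L c w h → f v = 1) ∧
      ∀ e ∈ rectBdryEdges L c w h, x' e = f (src e) * x e * (f (tgt e))⁻¹ := by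
  exact (isPotentialOn_rectPotential hwL hhL hx).exists_gauge
    (isPotentialOn_rectPotential hwL hhL hx') src_mem_rectBdryVtx tgt_mem_rectBdryVtx

end QDM
end
end

section
/- Let |ψ⟩ be a normalized ground state of Kitaev's quantum double model and let A be a rectangular sublattice contained in a contractible subregion with L boundary edges. Then the reduced state ρ_A = Tr_{Ā}|ψ⟩⟨ψ| is the maximally mixed state on a subspace of dimension |G|^{L−1}, so its von Neumann entropy is S(ρ_A) = (L−1)·log|G| = L·log|G| − log|G|. Consequently the topological entanglement entropy of the model is S_topo = −γ with γ = log|G|. -/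
/-!
Kitaev's quantum double model, formalized on the concrete `L × L` periodic square
lattice on the torus (the setting of Bravyi–Hastings–Michalakis TQO conditions used
in the paper).  Vertices are `ZMod L × ZMod L`; an oriented edge is a pair
`(v, d)` of its base vertex `v` and a direction `d : Bool` (`false` = rightward,
`true` = upward).  Each edge carries `ℂ[G]`, so the total Hilbert space is
`(Edge L → G) → ℂ` with the "group basis" given by delta functions.
"Contained in a contractible subregion" is rendered as the rectangle having side
lengths `< L`, i.e. not wrapping around the torus.
-/

open scoped BigOperators Classical

noncomputable section

namespace QDM

/-- The von Neumann entropy `S(ρ) = −Tr(ρ log ρ)` of a Hermitian matrix,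
computed from its eigenvalues (with the convention `0 log 0 = 0`, which holds
automatically since `Real.log 0 = 0`). -/
noncomputable def vnEntropy {n : Type} [Fintype n] [DecidableEq n]
    {ρ : Matrix n n ℂ} (hρ : ρ.IsHermitian) : ℝ :=
  -∑ i, hρ.eigenvalues i * Real.log (hρ.eigenvalues i)

/-!
The amplitudes of a ground state are constant along gauge orbits and supported on flat
configurations. On a rectangle `A` a flat configuration is pure gauge, with a unique gauge function
normalized to `1` at the corner `c`. Flatness of the plaquettes just outside `A` lets the exterior
edges determine the boundary edges, hence the gauge function on the boundary vertices, so `ρ_A` is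
block diagonal with respect to the `|G| ^ (ℓ - 1)` choices of these boundary values, where `ℓ` is
the number of boundary vertices, which equals the number of boundary edges. The values at the
interior vertices are free and change no exterior edge, so gauge invariance makes all entries of
all blocks equal. As the blocks have the same size, `ρ_A` is a multiple of a projector of rank
`|G| ^ (ℓ - 1)`.
-/

/-! ### Maximally mixed matrices -/

section MaximallyMixed

variable {n : Type} [Fintype n]

/-- `ρ` is the maximally mixed state on a `d`-dimensional subspace. Being a multiple of an
orthogonal projector is encoded by the quadratic equation; unit trace then forces that projector
to have rank `d`. -/
structure IsMaximallyMixed (ρ : Matrix n n ℂ) (d : ℕ) : Prop where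
  isHermitian : ρ.IsHermitian
  trace_eq_one : ρ.trace = 1
  mul_self : ρ * ρ = (d : ℂ)⁻¹ • ρ

theorem spectrum_subset_of_mul_self_eq_smul {𝕜 A : Type*} [Field 𝕜] [Ring A] [Algebra 𝕜 A]
    {a : A} {μ : 𝕜} (ha : a * a = μ • a) : spectrum 𝕜 a ⊆ {0, μ} := by
  nontriviality A
  intro r hr
  let p : Polynomial 𝕜 := .X * .X - .C μ * .X
  have hp : Polynomial.aeval a p = 0 := by simp [p, ha, Algebra.smul_def]
  have hmem : p.eval r ∈ spectrum 𝕜 (Polynomial.aeval a p) :=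
    spectrum.subset_polynomial_aeval a p ⟨r, hr, rfl⟩
  have hroot : r * r - μ * r = 0 := by simpa [hp, p] using hmem
  rw [← sub_mul, mul_eq_zero, sub_eq_zero] at hroot
  exact hroot.symm

theorem isOrthProjOnto_toLin'_range [DecidableEq n] {P : Matrix n n ℂ} (hP : P.IsHermitian)
    (hidem : P * P = P) : IsOrthProjOnto P.toLin' (LinearMap.range P.toLin') := by
  refine ⟨by rw [← Matrix.toLin'_mul, hidem], rfl, fun φ χ => ?_⟩
  change star (P.mulVec φ) ⬝ᵥ χ = star φ ⬝ᵥ P.mulVec χ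
  rw [Matrix.star_mulVec, hP.eq, Matrix.dotProduct_mulVec]

theorem finrank_range_toLin'_eq_trace {K : Type*} [Field K] [DecidableEq n] {P : Matrix n n K}
    (hidem : P * P = P) : (Module.finrank K (LinearMap.range P.toLin') : K) = P.trace := by
  have hlin : IsIdempotentElem P.toLin' := by
    rw [IsIdempotentElem, Module.End.mul_eq_comp, ← Matrix.toLin'_mul, hidem]
  rw [← (LinearMap.IsIdempotentElem.isProj_range _ hlin).trace, Matrix.trace_toLin'_eq]

namespace IsMaximallyMixed

variable {ρ : Matrix n n ℂ} {d : ℕ}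

open scoped ComplexOrder in
theorem natCast_ne_zero (hρ : IsMaximallyMixed ρ d) : (d : ℂ) ≠ 0 := by
  intro hd
  have hsq : ρ.conjTranspose * ρ = 0 := by rw [hρ.isHermitian.eq, hρ.mul_self, hd]; simp
  have hzero : ρ = 0 := Matrix.conjTranspose_mul_self_eq_zero.mp hsq
  simpa [hzero] using hρ.trace_eq_one

theorem smul_mul_smul (hρ : IsMaximallyMixed ρ d) :
    ((d : ℂ) • ρ) * ((d : ℂ) • ρ) = (d : ℂ) • ρ := by
  rw [Matrix.smul_mul, Matrix.mul_smul, hρ.mul_self, smul_inv_smul₀ hρ.natCast_ne_zero]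

theorem exists_isOrthProjOnto [DecidableEq n] (hρ : IsMaximallyMixed ρ d) :
    ∃ (W : Submodule ℂ (n → ℂ)) (Q : (n → ℂ) →ₗ[ℂ] (n → ℂ)),
      Module.finrank ℂ W = d ∧ IsOrthProjOnto Q W ∧ Matrix.toLin' ρ = (d : ℂ)⁻¹ • Q := by
  have hherm : ((d : ℂ) • ρ).IsHermitian := by
    rw [Matrix.IsHermitian, Matrix.conjTranspose_smul, hρ.isHermitian.eq, star_natCast]
  refine ⟨_, _, ?_, isOrthProjOnto_toLin'_range hherm hρ.smul_mul_smul, ?_⟩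
  · have htrace := finrank_range_toLin'_eq_trace hρ.smul_mul_smul
    rw [Matrix.trace_smul, hρ.trace_eq_one, smul_eq_mul, mul_one] at htrace
    exact_mod_cast htrace
  · rw [map_smul, inv_smul_smul₀ hρ.natCast_ne_zero]

theorem eigenvalues_eq_zero_or_inv [DecidableEq n] (hρ : IsMaximallyMixed ρ d) (i : n) :
    hρ.isHermitian.eigenvalues i = 0 ∨ hρ.isHermitian.eigenvalues i = (d : ℝ)⁻¹ := by
  have hsq : ρ * ρ = (d : ℝ)⁻¹ • ρ := by
    rw [hρ.mul_self, ← Complex.coe_smul, Complex.ofReal_inv, Complex.ofReal_natCast]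
  exact spectrum_subset_of_mul_self_eq_smul hsq (hρ.isHermitian.eigenvalues_mem_spectrum_real i)

theorem vnEntropy_eq_log [DecidableEq n] (hρ : IsMaximallyMixed ρ d) :
    vnEntropy hρ.isHermitian = Real.log d := by
  have hsum : ∑ i, hρ.isHermitian.eigenvalues i = 1 := by
    have htrace := hρ.isHermitian.trace_eq_sum_eigenvalues
    rw [hρ.trace_eq_one] at htrace
    exact Complex.ofReal_injective ((Complex.ofReal_sum _ _).trans htrace.symm)
  have hterm (i : n) : hρ.isHermitian.eigenvalues i * Real.log (hρ.isHermitian.eigenvalues i) =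
      hρ.isHermitian.eigenvalues i * -Real.log d := by
    rcases hρ.eigenvalues_eq_zero_or_inv i with hi | hi <;> simp [hi]
  rw [vnEntropy, Finset.sum_congr rfl fun i _ => hterm i, ← Finset.sum_mul, hsum, one_mul, neg_neg]

end IsMaximallyMixed

section Blocks

variable {S T : Type*} {ι : S → T → n}

theorem mul_self_of_constant_blocks {R : Type*} [Semiring R] [Fintype T] {M : Matrix n n R} {r : R}
    (hι : Function.Injective2 ι)
    (hblock : ∀ s t t', M (ι s t) (ι s t') = r)
    (hsupp : ∀ a a', M a a' ≠ 0 → ∃ s t t', a = ι s t ∧ a' = ι s t') :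
    M * M = (Fintype.card T * r) • M := by
  ext a a'
  rw [Matrix.mul_apply, Matrix.smul_apply, smul_eq_mul]
  by_cases hM : M a a' = 0
  · rw [hM, mul_zero]
    refine Finset.sum_eq_zero fun b _ => by_contra fun hne => left_ne_zero_of_mul hne ?_
    obtain ⟨s, t, t₁, rfl, rfl⟩ := hsupp _ _ (left_ne_zero_of_mul hne)
    obtain ⟨s', t₂, t', hst, rfl⟩ := hsupp _ _ (right_ne_zero_of_mul hne)
    obtain ⟨rfl, rfl⟩ := hι hst
    rw [hblock, ← hM, hblock]
  · obtain ⟨s, t, t', rfl, rfl⟩ := hsupp a a' hM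
    have hoff (b : n) (hb : b ∉ Set.range (ι s)) : M (ι s t) b * M b (ι s t') = 0 := by
      refine mul_eq_zero_of_left (by_contra fun hne => hb ?_) _
      obtain ⟨s', t₁, t₂, hst, rfl⟩ := hsupp _ _ hne
      obtain ⟨rfl, rfl⟩ := hι hst
      exact ⟨t₂, rfl⟩
    rw [← Fintype.sum_of_injective (ι s) (hι.right s) (fun _ => r * r) _ hoff fun u => by
      rw [hblock, hblock]]
    simp [hblock, mul_assoc]

theorem trace_of_constant_blocks {R : Type*} [Semiring R] [Fintype S] [Fintype T]
    {M : Matrix n n R} {r : R} (hι : Function.Injective2 ι)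
    (hblock : ∀ s t t', M (ι s t) (ι s t') = r)
    (hsupp : ∀ a a', M a a' ≠ 0 → ∃ s t t', a = ι s t ∧ a' = ι s t') :
    M.trace = Fintype.card S * (Fintype.card T * r) := by
  have hoff (a : n) (ha : a ∉ Set.range (Function.uncurry ι)) : M a a = 0 := by
    refine by_contra fun hne => ha ?_
    obtain ⟨s, t, -, rfl, -⟩ := hsupp a a hne
    exact ⟨(s, t), rfl⟩
  rw [Matrix.trace, ← Fintype.sum_of_injective (Function.uncurry ι) hι.uncurry (fun _ => r)
    M.diag hoff fun p => (hblock p.1 p.2 p.2).symm]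
  simp [mul_assoc]

theorem isMaximallyMixed_of_constant_blocks [Fintype S] [Finite T] {M : Matrix n n ℂ} {r : ℂ}
    (hι : Function.Injective2 ι)
    (hblock : ∀ s t t', M (ι s t) (ι s t') = r)
    (hsupp : ∀ a a', M a a' ≠ 0 → ∃ s t t', a = ι s t ∧ a' = ι s t')
    (hherm : M.IsHermitian) (htrace : M.trace = 1) : IsMaximallyMixed M (Fintype.card S) := by
  have := Fintype.ofFinite T
  refine ⟨hherm, htrace, ?_⟩
  rw [trace_of_constant_blocks hι hblock hsupp] at htrace
  rw [mul_self_of_constant_blocks hι hblock hsupp, eq_inv_of_mul_eq_one_right htrace]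

end Blocks

end MaximallyMixed

/-! ### Reduced density matrices and gauge invariance -/

section Merge

variable {S : Type} {L : ℕ} {A : Set (Edge L)} (a : {e // e ∈ A} → S) (b : {e // e ∉ A} → S)
  {e : Edge L}

theorem merge_of_mem (he : e ∈ A) : merge A a b e = a ⟨e, he⟩ := dif_pos he

theorem merge_of_notMem (he : e ∉ A) : merge A a b e = b ⟨e, he⟩ := dif_neg he

end Merge

section Rho

variable {S : Type} [Fintype S] {L : ℕ} [NeZero L] (A : Set (Edge L)) (ψ : (Edge L → S) → ℂ)

theorem isHermitian_rho : (rho A ψ).IsHermitian := by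
  ext a a'
  simp only [Matrix.conjTranspose_apply, rho, Matrix.of_apply, star_sum]
  exact Finset.sum_congr rfl fun b _ => by simp [mul_comm]

theorem trace_rho : (rho A ψ).trace = finner ψ ψ := by
  let split := Equiv.piEquivPiSubtypeProd (· ∈ A) fun _ => S
  have hmerge (p) : merge A p.1 p.2 = split.symm p := by
    funext e
    simp [merge, split]
  calc (rho A ψ).trace
      = ∑ p, ψ (merge A p.1 p.2) * (starRingEnd ℂ) (ψ (merge A p.1 p.2)) :=
        by simp only [Matrix.trace, Matrix.diag_apply, rho, Matrix.of_apply, Fintype.sum_prod_type]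
    _ = ∑ p, (starRingEnd ℂ) (ψ (split.symm p)) * ψ (split.symm p) :=
        Finset.sum_congr rfl fun p _ => by rw [hmerge, mul_comm]
    _ = finner ψ ψ := Equiv.sum_comp split.symm fun x => (starRingEnd ℂ) (ψ x) * ψ x

end Rho

section Gauge

variable {G : Type} [Group G] {L : ℕ}

theorem gaugeAll_one (x : Config G L) : gaugeAll 1 x = x := by
  funext e
  simp [gaugeAll]

theorem gaugeAll_mul (f g : Vtx L → G) (x : Config G L) :
    gaugeAll (f * g) x = gaugeAll f (gaugeAll g x) := by
  funext e
  simp [gaugeAll, mul_assoc]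

theorem gaugeAll_mulSingle (v : Vtx L) (g : G) (x : Config G L) :
    gaugeAll (Pi.mulSingle v g) x = gaugeOne v g x := by
  funext e
  simp only [gaugeAll, gaugeOne, Pi.mulSingle_apply]
  split_ifs <;> simp

/-- The group of gauge transformations that leave the amplitudes of `ψ` unchanged. -/
def gaugeStabilizer (ψ : H G L) : Subgroup (Vtx L → G) where
  carrier := {f | ∀ x, ψ (gaugeAll f x) = ψ x}
  one_mem' x := by rw [gaugeAll_one]
  mul_mem' hf hg x := by rw [gaugeAll_mul, hf, hg]
  inv_mem' {f} hf x := by rw [← hf (gaugeAll f⁻¹ x), ← gaugeAll_mul, mul_inv_cancel, gaugeAll_one]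

theorem apply_gaugeOne_of_Av_eq_self [Fintype G] {ψ : H G L} {v : Vtx L} (hψ : Av G L v ψ = ψ)
    (g : G) (x : Config G L) : ψ (gaugeOne v g x) = ψ x := by
  have hav (y : Config G L) : ψ y = (Fintype.card G : ℂ)⁻¹ * ∑ k : G, ψ (gaugeOne v k⁻¹ y) := by
    conv_lhs => rw [← hψ]
    simp [Av, Avg, LinearMap.sum_apply, Finset.sum_apply, LinearMap.funLeft_apply]
  have hcomp (k : G) : gaugeOne v (g * k)⁻¹ (gaugeOne v g x) = gaugeOne v k⁻¹ x := by
    simp only [← gaugeAll_mulSingle, ← gaugeAll_mul, ← Pi.mulSingle_mul]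
    simp
  rw [hav (gaugeOne v g x), hav x, ← Equiv.sum_comp (Equiv.mulLeft g)]
  simp only [Equiv.coe_mulLeft, hcomp]

theorem apply_gaugeAll_of_mem_Hgauge [Fintype G] [NeZero L] {ψ : H G L} (hψ : ψ ∈ Hgauge G L)
    (f : Vtx L → G) (x : Config G L) : ψ (gaugeAll f x) = ψ x := by
  suffices hf : f ∈ gaugeStabilizer ψ from hf x
  refine Subgroup.pi_mem_of_mulSingle_mem f fun v y => ?_
  have hv : Av G L v ψ = ψ := sub_eq_zero.mp ((Submodule.mem_iInf _).mp hψ v)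
  rw [gaugeAll_mulSingle, apply_gaugeOne_of_Av_eq_self hv]

/-- The gauge transformation `gaugeAll f` on the configurations of the edges satisfying `p`. -/
def gaugeOn (p : Edge L → Prop) (f : Vtx L → G) : Equiv.Perm ({e // p e} → G) :=
  Equiv.piCongrRight fun e => (Equiv.mulLeft (f (src e.1))).trans (Equiv.mulRight (f (tgt e.1))⁻¹)

theorem gaugeOn_apply (p : Edge L → Prop) (f : Vtx L → G) (a : {e // p e} → G) (e : {e // p e}) :
    gaugeOn p f a e = f (src e.1) * a e * (f (tgt e.1))⁻¹ := rfl

theorem gaugeOn_congr {p : Edge L → Prop} {f g : Vtx L → G}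
    (hfg : ∀ e, p e → f (src e) = g (src e) ∧ f (tgt e) = g (tgt e)) :
    gaugeOn p f = gaugeOn p g := by
  ext a e
  rw [gaugeOn_apply, gaugeOn_apply, (hfg e e.2).1, (hfg e e.2).2]

theorem gaugeAll_merge (A : Set (Edge L)) (f : Vtx L → G) (a : {e // e ∈ A} → G)
    (b : {e // e ∉ A} → G) :
    gaugeAll f (merge A a b) = merge A (gaugeOn (· ∈ A) f a) (gaugeOn (· ∉ A) f b) := by
  funext e
  by_cases he : e ∈ A <;> simp [merge, gaugeAll, gaugeOn_apply, he]

theorem rho_gaugeOn [Fintype G] [NeZero L] {ψ : H G L} (hψ : ψ ∈ Hgauge G L) {A : Set (Edge L)}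
    {f g : Vtx L → G} (hfg : ∀ e ∉ A, f (src e) = g (src e) ∧ f (tgt e) = g (tgt e))
    (a a' : {e // e ∈ A} → G) :
    rho A ψ (gaugeOn (· ∈ A) f a) (gaugeOn (· ∈ A) g a') = rho A ψ a a' := by
  simp only [rho, Matrix.of_apply]
  rw [← Equiv.sum_comp (gaugeOn (· ∉ A) f)]
  refine Finset.sum_congr rfl fun b _ => ?_
  rw [← gaugeAll_merge, gaugeOn_congr hfg, ← gaugeAll_merge, apply_gaugeAll_of_mem_Hgauge hψ,
    apply_gaugeAll_of_mem_Hgauge hψ]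

/-- The configuration gauge equivalent to the trivial one through `f`. -/
def pureGauge (f : Vtx L → G) : Config G L := gaugeAll f 1

theorem pureGauge_apply (f : Vtx L → G) (e : Edge L) :
    pureGauge f e = f (src e) * (f (tgt e))⁻¹ := by
  simp [pureGauge, gaugeAll]

theorem gaugeOn_one (p : Edge L → Prop) (f : Vtx L → G) :
    gaugeOn p f 1 = fun e => pureGauge f e.1 := by
  funext e
  rw [gaugeOn_apply, pureGauge_apply, Pi.one_apply, mul_one]

theorem eq_tgt_of_pureGauge_eq {f g : Vtx L → G} {e : Edge L} (hsrc : f (src e) = g (src e))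
    (he : pureGauge f e = pureGauge g e) : f (tgt e) = g (tgt e) := by
  rw [pureGauge_apply, pureGauge_apply, hsrc] at he
  exact inv_injective (mul_left_cancel he)

/-- A configuration whose holonomy around every plaquette is trivial. -/
def IsFlat (x : Config G L) : Prop := ∀ p, hol x (plaqBoundary p) = 1

theorem hol_plaqBoundary_eq_one_iff {x : Config G L} {p : Vtx L} :
    hol x (plaqBoundary p) = 1 ↔
      x (p, false) * x (p + (1, 0), true) = x (p, true) * x (p + (0, 1), false) := by
  simp [hol, plaqBoundary, ← mul_assoc, mul_inv_eq_iff_eq_mul]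

theorem isFlat_of_apply_ne_zero [Fintype G] {ψ : H G L} (hψ : ψ ∈ groundSpace G L)
    {x : Config G L} (hx : ψ x ≠ 0) : IsFlat x := by
  intro p
  have hBp : Bp G L p ψ = ψ := sub_eq_zero.mp ((Submodule.mem_iInf _).mp hψ.2 p)
  by_contra hp
  exact hx (by simpa [Bp, diagOpF, hp] using (congrFun hBp x).symm)

end Gauge

/-! ### Rectangles -/

section Rectangle

variable {L : ℕ} {c : Vtx L} {w h : ℕ}

/-- The vertex `i` steps to the right of and `j` steps above `c`. -/
def site (c : Vtx L) (i j : ℕ) : Vtx L := c + ((i : ZMod L), (j : ZMod L))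

theorem site_zero_zero (c : Vtx L) : site c 0 0 = c := by
  ext <;> simp [site]

theorem site_add_right (c : Vtx L) (i j : ℕ) : site c i j + (1, 0) = site c (i + 1) j := by
  ext <;> simp [site, add_assoc]

theorem site_add_up (c : Vtx L) (i j : ℕ) : site c i j + (0, 1) = site c i (j + 1) := by
  ext <;> simp [site, add_assoc]

theorem site_length_left (c : Vtx L) (j : ℕ) : site c L j = site c 0 j := by
  ext <;> simp [site]

theorem site_length_right (c : Vtx L) (i : ℕ) : site c i L = site c i 0 := by
  ext <;> simp [site]

theorem tgt_site_right (c : Vtx L) (i j : ℕ) : tgt (site c i j, false) = site c (i + 1) j := by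
  simp [tgt, site_add_right]

theorem tgt_site_up (c : Vtx L) (i j : ℕ) : tgt (site c i j, true) = site c i (j + 1) := by
  simp [tgt, site_add_up]

theorem site_inj {i j i' j' : ℕ} (hi : i < L) (hj : j < L) (hi' : i' < L) (hj' : j' < L) :
    site c i j = site c i' j' ↔ i = i' ∧ j = j' := by
  rw [site, site, add_right_inj, Prod.mk.injEq, ZMod.natCast_eq_natCast_iff',
    ZMod.natCast_eq_natCast_iff', Nat.mod_eq_of_lt hi, Nat.mod_eq_of_lt hi', Nat.mod_eq_of_lt hj,
    Nat.mod_eq_of_lt hj']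

theorem forall_mem_rectEdges {P : Edge L → Prop} :
    (∀ e ∈ rectEdges L c w h, P e) ↔
      (∀ i j, i < w → j ≤ h → P (site c i j, false)) ∧
        ∀ i j, i ≤ w → j < h → P (site c i j, true) := by
  refine ⟨fun hP => ⟨fun i j hi hj => hP _ ⟨i, j, rfl, by simp [hi, hj]⟩,
    fun i j hi hj => hP _ ⟨i, j, rfl, by simp [hi, hj]⟩⟩, ?_⟩
  rintro ⟨hright, hup⟩ ⟨v, d⟩ ⟨i, j, rfl : v = site c i j, hij⟩
  cases d
  · exact hright i j hij.1 hij.2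
  · exact hup i j hij.1 hij.2

theorem site_right_mem_rectEdges_iff (hwL : w < L) (hhL : h < L) {i j : ℕ} (hi : i < L)
    (hj : j < L) : (site c i j, false) ∈ rectEdges L c w h ↔ i < w ∧ j ≤ h := by
  refine ⟨?_, fun hij => ⟨i, j, rfl, by simpa using hij⟩⟩
  rintro ⟨i', j', hsite, hij'⟩
  simp only [Bool.false_eq_true, if_false] at hij'
  obtain ⟨rfl, rfl⟩ := (site_inj hi hj (by lia) (by lia)).mp hsite
  exact hij'

theorem site_up_mem_rectEdges_iff (hwL : w < L) (hhL : h < L) {i j : ℕ} (hi : i < L)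
    (hj : j < L) : (site c i j, true) ∈ rectEdges L c w h ↔ i ≤ w ∧ j < h := by
  refine ⟨?_, fun hij => ⟨i, j, rfl, by simpa using hij⟩⟩
  rintro ⟨i', j', hsite, hij'⟩
  simp only [if_true] at hij'
  obtain ⟨rfl, rfl⟩ := (site_inj hi hj (by lia) (by lia)).mp hsite
  exact hij'

theorem rectBdryEdges_subset_rectEdges : rectBdryEdges L c w h ⊆ rectEdges L c w h := by
  rintro e ⟨i, j, he, hij⟩
  refine ⟨i, j, he, ?_⟩
  split_ifs at hij ⊢ <;> lia

theorem src_notMem_rectIntVtx {e : Edge L} (he : e ∉ rectEdges L c w h) :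
    src e ∉ rectIntVtx L c w h := by
  rintro ⟨i, j, -, hiw, -, hjh, hsrc⟩
  refine he ⟨i, j, hsrc, ?_⟩
  split_ifs <;> lia

theorem tgt_notMem_rectIntVtx {e : Edge L} (he : e ∉ rectEdges L c w h) :
    tgt e ∉ rectIntVtx L c w h := by
  obtain ⟨v, d⟩ := e
  rintro ⟨_ | i, _ | j, hi, hiw, hj, hjh, htgt⟩ <;> try contradiction
  change tgt (v, d) = site c (i + 1) (j + 1) at htgt
  cases d
  · obtain rfl : v = site c i (j + 1) := add_right_cancel (htgt.trans (site_add_right c i _).symm)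
    exact he ⟨i, j + 1, rfl, by simp only [Bool.false_eq_true]; lia⟩
  · obtain rfl : v = site c (i + 1) j := add_right_cancel (htgt.trans (site_add_up c _ j).symm)
    exact he ⟨i + 1, j, rfl, by simp only [if_true]; lia⟩

theorem site_mem_rectIntVtx_iff (hwL : w < L) (hhL : h < L) {i j : ℕ} (hi : i ≤ w) (hj : j ≤ h) :
    site c i j ∈ rectIntVtx L c w h ↔ 0 < i ∧ i < w ∧ 0 < j ∧ j < h := by
  refine ⟨?_, fun ⟨hi₀, hiw, hj₀, hjh⟩ => ⟨i, j, hi₀, hiw, hj₀, hjh, rfl⟩⟩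
  rintro ⟨i', j', hi₀, hiw, hj₀, hjh, hsite⟩
  obtain ⟨rfl, rfl⟩ := (site_inj (by lia) (by lia) (by lia) (by lia)).mp hsite
  exact ⟨hi₀, hiw, hj₀, hjh⟩

theorem rectBdryVtx_eq_sdiff (hwL : w < L) (hhL : h < L) :
    rectBdryVtx L c w h = rectVtx L c w h \ rectIntVtx L c w h := by
  ext v
  constructor
  · rintro ⟨i, j, hi, hj, hij, rfl⟩
    exact ⟨⟨i, j, hi, hj, rfl⟩, fun hint => by
      have := (site_mem_rectIntVtx_iff hwL hhL hi hj).mp hint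
      lia⟩
  · rintro ⟨⟨i, j, hi, hj, rfl⟩, hint⟩
    have := (site_mem_rectIntVtx_iff hwL hhL hi hj).not.mp hint
    exact ⟨i, j, hi, hj, by lia, rfl⟩

theorem corner_mem_rectBdryVtx : c ∈ rectBdryVtx L c w h :=
  ⟨0, 0, w.zero_le, h.zero_le, .inl rfl, (site_zero_zero c).symm⟩

theorem ncard_image_site {s : Finset (ℕ × ℕ)} (hs : ∀ p ∈ s, p.1 < L ∧ p.2 < L) :
    ((fun p : ℕ × ℕ => site c p.1 p.2) '' s).ncard = s.card := by
  rw [Set.InjOn.ncard_image, Set.ncard_coe_finset]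
  intro p hp q hq hpq
  exact Prod.ext_iff.mpr ((site_inj (hs p hp).1 (hs p hp).2 (hs q hq).1 (hs q hq).2).mp hpq)

theorem ncard_rectVtx (hwL : w < L) (hhL : h < L) :
    (rectVtx L c w h).ncard = (w + 1) * (h + 1) := by
  have himage : rectVtx L c w h =
      (fun p : ℕ × ℕ => site c p.1 p.2) '' (Finset.Iic w ×ˢ Finset.Iic h : Finset (ℕ × ℕ)) := by
    ext v
    simp [rectVtx, site, eq_comm, and_assoc]
  rw [himage, ncard_image_site]
  · simp
  · simp only [Finset.mem_product, Finset.mem_Iic]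
    lia

theorem ncard_rectIntVtx (hwL : w < L) (hhL : h < L) :
    (rectIntVtx L c w h).ncard = (w - 1) * (h - 1) := by
  have himage : rectIntVtx L c w h =
      (fun p : ℕ × ℕ => site c p.1 p.2) '' (Finset.Ioo 0 w ×ˢ Finset.Ioo 0 h : Finset (ℕ × ℕ)) := by
    ext v
    simp [rectIntVtx, site, eq_comm, and_assoc]
  rw [himage, ncard_image_site]
  · simp
  · simp only [Finset.mem_product, Finset.mem_Ioo]
    lia

theorem ncard_rectBdryVtx [NeZero L] (hw : 0 < w) (hh : 0 < h) (hwL : w < L) (hhL : h < L) :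
    (rectBdryVtx L c w h).ncard = 2 * (w + h) := by
  have hsub : rectIntVtx L c w h ⊆ rectVtx L c w h := by
    rintro v ⟨i, j, -, hi, -, hj, hv⟩
    exact ⟨i, j, hi.le, hj.le, hv⟩
  rw [rectBdryVtx_eq_sdiff hwL hhL, Set.ncard_sdiff hsub, ncard_rectVtx hwL hhL,
    ncard_rectIntVtx hwL hhL]
  obtain ⟨w, rfl⟩ := Nat.exists_eq_add_of_lt hw
  obtain ⟨h, rfl⟩ := Nat.exists_eq_add_of_lt hh
  simp only [zero_add, Nat.add_sub_cancel]
  exact Nat.sub_eq_of_eq_add (by ring)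

end Rectangle

section FlatRectangle

variable {G : Type} [Group G] {L : ℕ} {c : Vtx L} {w h : ℕ} {x y : Config G L} {f g : Vtx L → G}

theorem eq_site_of_row {i j : ℕ} (hstart : f (site c 0 j) = g (site c 0 j))
    (hrow : ∀ k < i, pureGauge f (site c k j, false) = pureGauge g (site c k j, false)) :
    f (site c i j) = g (site c i j) := by
  induction i with
  | zero => exact hstart
  | succ i ih =>
    have hstep := eq_tgt_of_pureGauge_eq (ih fun k hk => hrow k (by lia)) (hrow i i.lt_succ_self)
    rwa [tgt_site_right] at hstep

theorem eq_site_of_column {i j : ℕ} (hstart : f (site c i 0) = g (site c i 0))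
    (hcol : ∀ k < j, pureGauge f (site c i k, true) = pureGauge g (site c i k, true)) :
    f (site c i j) = g (site c i j) := by
  induction j with
  | zero => exact hstart
  | succ j ih =>
    have hstep := eq_tgt_of_pureGauge_eq (ih fun k hk => hcol k (by lia)) (hcol j j.lt_succ_self)
    rwa [tgt_site_up] at hstep

theorem eqOn_rectVtx_of_pureGauge (hc : f c = g c)
    (hfg : Set.EqOn (pureGauge f) (pureGauge g) (rectEdges L c w h)) :
    Set.EqOn f g (rectVtx L c w h) := by
  obtain ⟨hright, hup⟩ := forall_mem_rectEdges.mp hfg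
  rintro _ ⟨i, j, hi, hj, rfl⟩
  have hbottom : f (site c i 0) = g (site c i 0) :=
    eq_site_of_row (by rwa [site_zero_zero]) fun k hk => hright k 0 (by lia) (by lia)
  exact eq_site_of_column hbottom fun k hk => hup i k hi (by lia)

theorem eqOn_rectEdges_pureGauge (hfg : Set.EqOn f g (rectVtx L c w h)) :
    Set.EqOn (pureGauge f) (pureGauge g) (rectEdges L c w h) := by
  have hsite (i j : ℕ) (hi : i ≤ w) (hj : j ≤ h) : f (site c i j) = g (site c i j) :=
    hfg ⟨i, j, hi, hj, rfl⟩
  refine forall_mem_rectEdges.mpr ⟨fun i j hi hj => ?_, fun i j hi hj => ?_⟩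
  · rw [pureGauge_apply, pureGauge_apply, tgt_site_right, src, hsite i j hi.le hj,
      hsite (i + 1) j hi hj]
  · rw [pureGauge_apply, pureGauge_apply, tgt_site_up, src, hsite i j hi hj.le,
      hsite i (j + 1) hi hj]

theorem eqOn_rectBdryVtx_of_pureGauge (hc : f c = g c)
    (hfg : Set.EqOn (pureGauge f) (pureGauge g) (rectBdryEdges L c w h)) :
    Set.EqOn f g (rectBdryVtx L c w h) := by
  have hrow (j : ℕ) (hj : j = 0 ∨ j = h) (hstart : f (site c 0 j) = g (site c 0 j)) (i : ℕ)
      (hi : i ≤ w) : f (site c i j) = g (site c i j) :=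
    eq_site_of_row hstart fun k hk => hfg ⟨k, j, rfl, by simp only [Bool.false_eq_true]; lia⟩
  have hcol (i : ℕ) (hi : i = 0 ∨ i = w) (hstart : f (site c i 0) = g (site c i 0)) (j : ℕ)
      (hj : j ≤ h) : f (site c i j) = g (site c i j) :=
    eq_site_of_column hstart fun k hk => hfg ⟨i, k, rfl, by simp only [if_true]; lia⟩
  have hcorner : f (site c 0 0) = g (site c 0 0) := by rwa [site_zero_zero]
  rintro _ ⟨i, j, hi, hj, rfl | rfl | rfl | rfl, rfl⟩
  · exact hcol 0 (.inl rfl) hcorner j hj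
  · exact hcol i (.inr rfl) (hrow 0 (.inl rfl) hcorner i le_rfl) j hj
  · exact hrow 0 (.inl rfl) hcorner i hi
  · exact hrow j (.inr rfl) (hcol 0 (.inl rfl) hcorner j le_rfl) i hi

/-- Parallel transport of `x` from `c` to `site c i j`, first along the bottom row and then up. -/
def transport (c : Vtx L) (x : Config G L) : ℕ → ℕ → G
  | 0, 0 => 1
  | i + 1, 0 => transport c x i 0 * x (site c i 0, false)
  | i, j + 1 => transport c x i j * x (site c i j, true)

theorem transport_up (c : Vtx L) (x : Config G L) (i j : ℕ) :
    transport c x i (j + 1) = transport c x i j * x (site c i j, true) := by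
  rw [transport]

theorem IsFlat.plaquette (hx : IsFlat x) (c : Vtx L) (i j : ℕ) :
    x (site c i j, false) * x (site c (i + 1) j, true) =
      x (site c i j, true) * x (site c i (j + 1), false) := by
  rw [← site_add_right, ← site_add_up]
  exact hol_plaqBoundary_eq_one_iff.mp (hx _)

theorem IsFlat.transport_right (hx : IsFlat x) (c : Vtx L) (i j : ℕ) :
    transport c x (i + 1) j = transport c x i j * x (site c i j, false) := by
  induction j with
  | zero => rw [transport]
  | succ j ih => rw [transport_up, transport_up, ih, mul_assoc, hx.plaquette, mul_assoc]

theorem IsFlat.exists_pureGauge_eqOn_rectEdges (hx : IsFlat x) (hwL : w < L) (hhL : h < L) :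
    ∃ f : Vtx L → G, f c = 1 ∧ Set.EqOn (pureGauge f) x (rectEdges L c w h) := by
  let f (v : Vtx L) : G := (transport c x (v.1 - c.1).val (v.2 - c.2).val)⁻¹
  have hf {i j : ℕ} (hi : i < L) (hj : j < L) : f (site c i j) = (transport c x i j)⁻¹ := by
    simp [f, site, ZMod.val_natCast, Nat.mod_eq_of_lt hi, Nat.mod_eq_of_lt hj]
  refine ⟨f, by simp [f, transport], forall_mem_rectEdges.mpr ⟨fun i j hi hj => ?_,
    fun i j hi hj => ?_⟩⟩
  · rw [pureGauge_apply, tgt_site_right, src, hf (by lia) (by lia), hf (by lia) (by lia),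
      hx.transport_right, inv_inv, inv_mul_cancel_left]
  · rw [pureGauge_apply, tgt_site_up, src, hf (by lia) (by lia), hf (by lia) (by lia),
      transport_up, inv_inv, inv_mul_cancel_left]

/- Each boundary edge is the only edge of the rectangle on the plaquette adjacent to it from
outside, so flatness of that plaquette recovers it from the exterior edges. -/
theorem IsFlat.eqOn_rectBdryEdges (hx : IsFlat x) (hy : IsFlat y) (hwL : w + 1 < L)
    (hhL : h + 1 < L) (hxy : Set.EqOn x y (rectEdges L c w h)ᶜ) :
    Set.EqOn x y (rectBdryEdges L c w h) := by
  have hright (i j : ℕ) (hi : i < L) (hj : j < L) (hij : ¬(i < w ∧ j ≤ h)) :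
      x (site c i j, false) = y (site c i j, false) :=
    hxy (mt (site_right_mem_rectEdges_iff (by lia) (by lia) hi hj).mp hij)
  have hup (i j : ℕ) (hi : i < L) (hj : j < L) (hij : ¬(i ≤ w ∧ j < h)) :
      x (site c i j, true) = y (site c i j, true) :=
    hxy (mt (site_up_mem_rectEdges_iff (by lia) (by lia) hi hj).mp hij)
  have hL : L - 1 + 1 = L := by lia
  rintro ⟨v, d⟩ ⟨i, j, rfl : v = site c i j, hij⟩
  cases d
  · obtain ⟨hi, rfl | rfl⟩ : i < w ∧ (j = 0 ∨ j = h) := hij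
    · have hplaq := hx.plaquette c i (L - 1)
      rw [hright i _ (by lia) (by lia) (by lia), hup (i + 1) _ (by lia) (by lia) (by lia),
        hup i _ (by lia) (by lia) (by lia), hy.plaquette, hL, site_length_right] at hplaq
      exact (mul_left_cancel hplaq).symm
    · have hplaq := hx.plaquette c i j
      rw [hup (i + 1) j (by lia) (by lia) (by lia), hup i j (by lia) (by lia) (by lia),
        hright i (j + 1) (by lia) (by lia) (by lia), ← hy.plaquette] at hplaq
      exact mul_right_cancel hplaq
  · obtain ⟨rfl | rfl, hj⟩ : (i = 0 ∨ i = w) ∧ j < h := hij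
    · have hplaq := hx.plaquette c (L - 1) j
      rw [hright (L - 1) j (by lia) (by lia) (by lia), hup (L - 1) j (by lia) (by lia) (by lia),
        hright (L - 1) (j + 1) (by lia) (by lia) (by lia), ← hy.plaquette, hL,
        site_length_left] at hplaq
      exact mul_left_cancel hplaq
    · have hplaq := hx.plaquette c i j
      rw [hright i j (by lia) (by lia) (by lia), hright i (j + 1) (by lia) (by lia) (by lia),
        hup (i + 1) j (by lia) (by lia) (by lia), hy.plaquette] at hplaq
      exact (mul_right_cancel hplaq).symm

end FlatRectangle

/-! ### The reduced state on a rectangle -/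

section Glue

variable {V G : Type*} [One G] {D I : Set V}

/-- The function equal to `s` on `D`, to `t` on `I \ D` and to `1` elsewhere. -/
def glue (s : D → G) (t : I → G) : V → G :=
  Function.extend Subtype.val s (Function.extend Subtype.val t 1)

theorem glue_left (s : D → G) (t : I → G) (v : D) : glue s t v = s v :=
  Subtype.val_injective.extend_apply s _ v

theorem glue_of_notMem_left (s : D → G) (t : I → G) {v : V} (hv : v ∉ D) :
    glue s t v = Function.extend (Subtype.val : I → V) t 1 v :=
  Function.extend_apply' s _ v fun ⟨u, hu⟩ => hv (hu ▸ u.2)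

theorem glue_right (hDI : Disjoint D I) (s : D → G) (t : I → G) (v : I) : glue s t v = t v := by
  rw [glue_of_notMem_left s t (hDI.notMem_of_mem_right v.2), Subtype.val_injective.extend_apply]

theorem glue_of_notMem (s : D → G) (t : I → G) {v : V} (hD : v ∉ D) (hI : v ∉ I) :
    glue s t v = 1 := by
  rw [glue_of_notMem_left s t hD]
  exact Function.extend_apply' t _ v fun ⟨u, hu⟩ => hI (hu ▸ u.2)

theorem glue_congr_of_notMem_right (s : D → G) (t t' : I → G) {v : V} (hv : v ∉ I) :
    glue s t v = glue s t' v := by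
  by_cases hD : v ∈ D
  · exact (glue_left s t ⟨v, hD⟩).trans (glue_left s t' ⟨v, hD⟩).symm
  · rw [glue_of_notMem s t hD hv, glue_of_notMem s t' hD hv]

theorem eqOn_glue_domRestrict (hDI : Disjoint D I) (f : V → G) :
    Set.EqOn (glue (D.domRestrict f) (I.domRestrict f)) f (D ∪ I) := by
  rintro v (hv | hv)
  · exact glue_left _ _ ⟨v, hv⟩
  · exact glue_right hDI _ _ ⟨v, hv⟩

end Glue

section ReducedState

variable {G : Type} [Group G] {L : ℕ} {c : Vtx L} {w h : ℕ}

/-- The pure gauge configuration on a rectangle with gauge function `1` at the corner `c`, `s` on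
the other boundary vertices and `t` on the interior vertices. -/
def rectConfig (s : ↥(rectBdryVtx L c w h \ {c}) → G) (t : rectIntVtx L c w h → G) :
    {e // e ∈ rectEdges L c w h} → G :=
  fun e => pureGauge (glue s t) e

theorem disjoint_rectBdryVtx_rectIntVtx (hwL : w < L) (hhL : h < L) :
    Disjoint (rectBdryVtx L c w h) (rectIntVtx L c w h) := by
  rw [rectBdryVtx_eq_sdiff hwL hhL]
  exact Set.disjoint_sdiff_left

theorem disjoint_rectBdryVtx_sdiff_rectIntVtx (hwL : w < L) (hhL : h < L) :
    Disjoint (rectBdryVtx L c w h \ {c}) (rectIntVtx L c w h) :=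
  (disjoint_rectBdryVtx_rectIntVtx hwL hhL).mono_left Set.sdiff_subset

theorem glue_corner (hwL : w < L) (hhL : h < L) (s : ↥(rectBdryVtx L c w h \ {c}) → G)
    (t : rectIntVtx L c w h → G) : glue s t c = 1 :=
  glue_of_notMem s t (fun hc => hc.2 rfl)
    ((disjoint_rectBdryVtx_rectIntVtx hwL hhL).notMem_of_mem_left corner_mem_rectBdryVtx)

theorem injective2_rectConfig (hwL : w < L) (hhL : h < L) :
    Function.Injective2 (rectConfig (G := G) (c := c) (w := w) (h := h)) := by
  intro s s' t t' hst
  have hc : glue s t c = glue s' t' c := by rw [glue_corner hwL hhL, glue_corner hwL hhL]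
  have hglue : Set.EqOn (glue s t) (glue s' t') (rectVtx L c w h) :=
    eqOn_rectVtx_of_pureGauge hc fun e he => congrFun hst ⟨e, he⟩
  have hdisj := disjoint_rectBdryVtx_sdiff_rectIntVtx (c := c) hwL hhL
  constructor
  · funext ⟨v, hv⟩
    obtain ⟨i, j, hi, hj, -, hsite⟩ := hv.1
    simpa only [glue_left _ _ ⟨v, hv⟩] using hglue ⟨i, j, hi, hj, hsite⟩
  · funext ⟨v, hv⟩
    obtain ⟨i, j, -, hi, -, hj, hsite⟩ := id hv
    simpa only [glue_right hdisj _ _ ⟨v, hv⟩] using hglue ⟨i, j, hi.le, hj.le, hsite⟩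

theorem rectConfig_domRestrict (hwL : w < L) (hhL : h < L) {f : Vtx L → G} (hf : f c = 1) :
    rectConfig ((rectBdryVtx L c w h \ {c}).domRestrict f) ((rectIntVtx L c w h).domRestrict f) =
      fun e : {e // e ∈ rectEdges L c w h} => pureGauge f e := by
  have hglue : Set.EqOn (glue ((rectBdryVtx L c w h \ {c}).domRestrict f)
      ((rectIntVtx L c w h).domRestrict f)) f (rectVtx L c w h) := by
    intro v hv
    by_cases hvc : v = c
    · rw [hvc, glue_corner hwL hhL, hf]
    · refine eqOn_glue_domRestrict (disjoint_rectBdryVtx_sdiff_rectIntVtx hwL hhL) f ?_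
      by_cases hint : v ∈ rectIntVtx L c w h
      · exact .inr hint
      · exact .inl ⟨rectBdryVtx_eq_sdiff hwL hhL ▸ ⟨hv, hint⟩, hvc⟩
  funext e
  exact eqOn_rectEdges_pureGauge hglue e.2

theorem rho_rectConfig [Fintype G] [NeZero L] {ψ : H G L} (hψ : ψ ∈ Hgauge G L)
    (s : ↥(rectBdryVtx L c w h \ {c}) → G) (t t' : rectIntVtx L c w h → G) :
    rho (rectEdges L c w h) ψ (rectConfig s t) (rectConfig s t') =
      rho (rectEdges L c w h) ψ 1 1 := by
  have hout (e : Edge L) (he : e ∉ rectEdges L c w h) :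
      glue s t (src e) = glue s t' (src e) ∧ glue s t (tgt e) = glue s t' (tgt e) :=
    ⟨glue_congr_of_notMem_right s t t' (src_notMem_rectIntVtx he),
      glue_congr_of_notMem_right s t t' (tgt_notMem_rectIntVtx he)⟩
  have hrho := rho_gaugeOn hψ hout 1 1
  rwa [gaugeOn_one, gaugeOn_one] at hrho

theorem exists_rectConfig_of_rho_ne_zero [Fintype G] [NeZero L] {ψ : H G L}
    (hψ : ψ ∈ groundSpace G L) (hwL : w + 1 < L) (hhL : h + 1 < L)
    (a a' : {e // e ∈ rectEdges L c w h} → G) (hne : rho (rectEdges L c w h) ψ a a' ≠ 0) :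
    ∃ s t t', a = rectConfig s t ∧ a' = rectConfig s t' := by
  obtain ⟨b, -, hb⟩ := Finset.exists_ne_zero_of_sum_ne_zero hne
  have hx : IsFlat (merge _ a b) := isFlat_of_apply_ne_zero hψ (left_ne_zero_of_mul hb)
  have hy : IsFlat (merge _ a' b) :=
    isFlat_of_apply_ne_zero hψ fun h0 => right_ne_zero_of_mul hb (by rw [h0, map_zero])
  obtain ⟨f, hfc, hf⟩ := hx.exists_pureGauge_eqOn_rectEdges (w := w) (h := h) (by lia) (by lia)
  obtain ⟨f', hfc', hf'⟩ := hy.exists_pureGauge_eqOn_rectEdges (w := w) (h := h) (by lia) (by lia)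
  have hext : Set.EqOn (merge (rectEdges L c w h) a b) (merge _ a' b) (rectEdges L c w h)ᶜ :=
    fun e he => by rw [merge_of_notMem _ _ he, merge_of_notMem _ _ he]
  have hbdry : Set.EqOn f f' (rectBdryVtx L c w h) := by
    refine eqOn_rectBdryVtx_of_pureGauge (hfc.trans hfc'.symm) fun e he => ?_
    have hmem := rectBdryEdges_subset_rectEdges he
    rw [hf hmem, hf' hmem, hx.eqOn_rectBdryEdges hy hwL hhL hext he]
  have hrestrict : (rectBdryVtx L c w h \ {c}).domRestrict f =
      (rectBdryVtx L c w h \ {c}).domRestrict f' := funext fun v => hbdry v.2.1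
  refine ⟨(rectBdryVtx L c w h \ {c}).domRestrict f, (rectIntVtx L c w h).domRestrict f,
    (rectIntVtx L c w h).domRestrict f', ?_, ?_⟩
  · rw [rectConfig_domRestrict (by lia) (by lia) hfc]
    exact funext fun e => (merge_of_mem a b e.2).symm.trans (hf e.2).symm
  · rw [hrestrict, rectConfig_domRestrict (by lia) (by lia) hfc']
    exact funext fun e => (merge_of_mem a' b e.2).symm.trans (hf' e.2).symm

theorem isMaximallyMixed_rho_rectEdges [Fintype G] [NeZero L] {ψ : H G L}
    (hψ : ψ ∈ groundSpace G L) (hnorm : finner ψ ψ = 1) (hw : 0 < w) (hh : 0 < h)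
    (hwL : w + 1 < L) (hhL : h + 1 < L) :
    IsMaximallyMixed (rho (rectEdges L c w h) ψ) (Fintype.card G ^ (2 * (w + h) - 1)) := by
  have hcard : Fintype.card (↥(rectBdryVtx L c w h \ {c}) → G) =
      Fintype.card G ^ (2 * (w + h) - 1) := by
    rw [Fintype.card_fun, ← Set.toFinset_card, ← Set.ncard_eq_toFinset_card',
      Set.ncard_sdiff_singleton_of_mem corner_mem_rectBdryVtx,
      ncard_rectBdryVtx hw hh (by lia) (by lia)]
  rw [← hcard]
  exact isMaximallyMixed_of_constant_blocks (injective2_rectConfig (by lia) (by lia))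
    (rho_rectConfig hψ.1) (exists_rectConfig_of_rho_ne_zero hψ hwL hhL) (isHermitian_rho _ ψ)
    ((trace_rho _ ψ).trans hnorm)

end ReducedState

/-- **Entanglement entropy of the ground state and the topological
entanglement entropy.**  Let `ψ` be a normalized ground state of Kitaev's
quantum double model and `A` a `w × h` rectangle contained in a contractible
subregion, with `ℓ = 2(w+h)` boundary edges.  Then the reduced state
`ρ_A = Tr_{Ā}|ψ⟩⟨ψ|` is the maximally mixed state on a subspace of dimension
`|G|^{ℓ−1}`, and hence its von Neumann entropy is
`S(ρ_A) = (ℓ−1)·log|G| = ℓ·log|G| − log|G|`: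
an exact area law `S = α·ℓ − γ` with `α = log|G|` and topological
entanglement entropy `S_topo = −γ = −log|G|`. -/
theorem ground_state_entanglement_entropy
    (G : Type) [Group G] [Fintype G] (L : ℕ) [NeZero L] (c : Vtx L) (w h : ℕ)
    (hw : 0 < w) (hwL : w + 1 < L) (hh : 0 < h) (hhL : h + 1 < L)
    (ψ : H G L) (hψ : ψ ∈ groundSpace G L) (hnorm : finner ψ ψ = 1) :
    (∃ (W : Submodule ℂ (({e : Edge L // e ∈ rectEdges L c w h} → G) → ℂ))
       (Q : (({e : Edge L // e ∈ rectEdges L c w h} → G) → ℂ) →ₗ[ℂ]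
            (({e : Edge L // e ∈ rectEdges L c w h} → G) → ℂ)),
      Module.finrank ℂ W = Fintype.card G ^ (2 * (w + h) - 1) ∧
      IsOrthProjOnto Q W ∧
      Matrix.toLin' (rho (rectEdges L c w h) ψ) =
        ((Fintype.card G : ℂ) ^ (2 * (w + h) - 1))⁻¹ • Q) ∧
    ∃ hherm : (rho (rectEdges L c w h) ψ).IsHermitian,
      vnEntropy hherm =
        (2 * (w + h) : ℝ) * Real.log (Fintype.card G) - Real.log (Fintype.card G) := by
  have hρ := isMaximallyMixed_rho_rectEdges (c := c) hψ hnorm hw hh hwL hhL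
  refine ⟨by simpa only [Nat.cast_pow] using hρ.exists_isOrthProjOnto, hρ.isHermitian, ?_⟩
  rw [hρ.vnEntropy_eq_log, Nat.cast_pow, Real.log_pow, Nat.cast_sub (by lia)]
  push_cast
  ring

end QDM
end
end
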